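/- Let Γ ⊂ ℂ be a quasismooth Jordan curve. There exists ε₁ = ε₁(Γ) > 0 with the following property. Let 0 < s < diam Γ, and let z_s ∈ Γ and ζ_s ∈ Γ_{δ(s)} satisfy |z_s − ζ_s| = s = ρ_{δ(s)}(z_s). Let z_s*, z_s** ∈ Γ be the points with z_s ∈ Γ(z_s*, z_s**) =: E_s and |Γ(z_s*, z_s)| = |Γ(z_s, z_s**)| = s/2, set A_s := closure(Γ ∖ E_s), let Ω_s be the complement of A_s in the Riemann sphere, and let Φ_s : Ω_s → 𝔻* be the conformal map (holomorphic bijection) normalized by Φ_s(∞) = ∞ and Φ_s′(∞) > 0. Then |Φ_s(z_s)| ≥ exp(ε₁ δ(s)). -/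

import Mathlib

open MeasureTheory Metric Set Filter Bornology Complex
open scoped ENNReal NNReal Topology

noncomputable section

/-- `Γ` is a Jordan curve: the image of an injective continuous map of the unit circle. -/
def IsJordanCurve (Γ : Set ℂ) : Prop :=
  ∃ γ : ℂ → ℂ, ContinuousOn γ (Metric.sphere (0:ℂ) 1) ∧
    Set.InjOn γ (Metric.sphere (0:ℂ) 1) ∧ Γ = γ '' (Metric.sphere (0:ℂ) 1)

/-- A (closed) subarc of `Γ`: a closed connected subset. -/
def IsSubarc (Γ J : Set ℂ) : Prop :=
  J ⊆ Γ ∧ IsClosed J ∧ IsPreconnected J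

/-- `|Γ(z₁,z₂)|`: the length (1-dimensional Hausdorff measure) of the shorter subarc of `Γ`
joining `z₁` and `z₂`, described as the infimum of lengths of closed connected subsets of `Γ`
containing both points. -/
def shorterArcLength (Γ : Set ℂ) (z₁ z₂ : ℂ) : ℝ≥0∞ :=
  ⨅ (J : Set ℂ) (_ : IsSubarc Γ J ∧ z₁ ∈ J ∧ z₂ ∈ J), μH[1] J

/-- `J` is (a realization of) the shorter arc `Γ(z₁,z₂)` of `Γ` between `z₁` and `z₂`. -/
def IsShorterArc (Γ : Set ℂ) (z₁ z₂ : ℂ) (J : Set ℂ) : Prop :=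
  IsSubarc Γ J ∧ z₁ ∈ J ∧ z₂ ∈ J ∧ μH[1] J = shorterArcLength Γ z₁ z₂

/-- `Γ` is quasismooth (in the sense of Lavrentiev) with constant `Λ ≥ 1`:
`|Γ(z₁,z₂)| ≤ Λ |z₁ - z₂|`. -/
def IsQuasismooth (Γ : Set ℂ) (Λ : ℝ) : Prop :=
  1 ≤ Λ ∧ ∀ z₁ ∈ Γ, ∀ z₂ ∈ Γ,
    shorterArcLength Γ z₁ z₂ ≤ ENNReal.ofReal (Λ * dist z₁ z₂)

/-- The union of the unbounded connected components of `Γᶜ`; for a Jordan curve `Γ` this is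
the (unique) unbounded component `Ω` of the complement of `Γ`. -/
def unboundedComponent (Γ : Set ℂ) : Set ℂ :=
  {z | z ∉ Γ ∧ ¬ Bornology.IsBounded (connectedComponentIn Γᶜ z)}

/-- `d(A,B) := inf {|z-ζ| : z ∈ A, ζ ∈ B}`. -/
def setDist (A B : Set ℂ) : ℝ := sInf (Set.image2 dist A B)

/-- The exterior `𝔻*` of the closed unit disk (finite part). -/
def extDisk : Set ℂ := {w : ℂ | 1 < ‖w‖}

/-- `Φ` is the conformal (holomorphic bijective) map of `Ω` onto `𝔻* = {|w| > 1}` normalized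
by `Φ(∞) = ∞` and `Φ'(∞) := lim_{z→∞} Φ(z)/z > 0`. -/
def IsExtConformal (Ω : Set ℂ) (Φ : ℂ → ℂ) : Prop :=
  DifferentiableOn ℂ Φ Ω ∧ Set.BijOn Φ Ω extDisk ∧
    ∃ c : ℝ, 0 < c ∧
      Filter.Tendsto (fun z => Φ z / z) (Bornology.cobounded ℂ) (nhds (c : ℂ))

/-- `Φ` additionally extends to a homeomorphism of `closure Ω` onto `{|w| ≥ 1}`. -/
def IsExtConformalClosure (Ω : Set ℂ) (Φ : ℂ → ℂ) : Prop :=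
  IsExtConformal Ω Φ ∧ ContinuousOn Φ (closure Ω) ∧
    Set.BijOn Φ (closure Ω) {w : ℂ | 1 ≤ ‖w‖}

/-- The level curve `Γ_δ := {ζ ∈ Ω : |Φ(ζ)| = 1 + δ}`. -/
def levelCurve (Ω : Set ℂ) (Φ : ℂ → ℂ) (δ : ℝ) : Set ℂ :=
  {ζ ∈ Ω | ‖Φ ζ‖ = 1 + δ}

/-- `ρ_δ(z) := d({z}, Γ_δ)`. -/
def rho (Ω : Set ℂ) (Φ : ℂ → ℂ) (δ : ℝ) (z : ℂ) : ℝ :=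
  Metric.infDist z (levelCurve Ω Φ δ)

/-- `ν ∈ A∞(Γ)` with constant `lam ≥ 1`: `ν(J) ≤ lam · ν(S)` for every subarc `J ⊂ Γ` and
every Borel set `S ⊂ J` with `|J| ≤ 2|S|`. -/
def IsAInftyMeasure (Γ : Set ℂ) (ν : MeasureTheory.Measure ℂ) (lam : ℝ) : Prop :=
  1 ≤ lam ∧ ∀ J S : Set ℂ, IsSubarc Γ J → S ⊆ J → MeasurableSet S →
    μH[1] J ≤ 2 * μH[1] S → ν J ≤ ENNReal.ofReal lam * ν S

/-- Harnack's inequality at the centre of a disk, for the positive harmonic function `log ‖f‖`. -/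
theorem harnack_log_norm {f : ℂ → ℂ} {c z : ℂ} {r : ℝ} (hf : DifferentiableOn ℂ f (ball c r))
    (h1 : ∀ w ∈ ball c r, 1 < ‖f w‖) (hz : z ∈ ball c r) :
    (r - dist z c) * Real.log ‖f c‖ ≤ (r + dist z c) * Real.log ‖f z‖ := by
  have hr : 0 < r := nonempty_ball.1 ⟨z, hz⟩
  have hc : c ∈ ball c r := mem_ball_self hr
  have hne : ∀ w ∈ ball c r, f w ≠ 0 := fun w hw => norm_pos_iff.1 (zero_lt_one.trans (h1 w hw))
  have hd : DifferentiableOn ℂ (fun w => deriv f w / f w) (ball c r) :=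
    (hf.deriv isOpen_ball).div hf hne
  set m : ℝ := Real.log ‖f c‖ with hm
  obtain ⟨g, hgc, hg⟩ := hd.isExactOn_ball.with_val_at c (m : ℂ)
  have hnorm : ∀ w ∈ ball c r, ‖f w‖ = Real.exp (g w).re := by
    intro w hw
    have hder : ∀ x ∈ ball c r, HasDerivAt (fun x => f x * exp (-g x)) 0 x := by
      intro x hx
      have h2 := (hf.differentiableAt (isOpen_ball.mem_nhds hx)).hasDerivAt
      have h3 : deriv f x * exp (-g x) + f x * (exp (-g x) * -(deriv f x / f x)) = 0 := by
        have := hne x hx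
        field_simp
        ring
      exact h3 ▸ h2.mul (hg x hx).neg.cexp
    have hconst := isOpen_ball.is_const_of_deriv_eq_zero (convex_ball c r).isPreconnected
      (fun x hx => (hder x hx).differentiableAt.differentiableWithinAt)
      (fun x hx => (hder x hx).deriv) hw hc
    have h3 := congrArg norm hconst
    simp only [norm_mul, norm_exp, neg_re, hgc, ofReal_re] at h3
    rw [Real.exp_neg, Real.exp_neg, hm, Real.exp_log (zero_lt_one.trans (h1 c hc)),
      mul_inv_cancel₀ (zero_lt_one.trans (h1 c hc)).ne'] at h3
    exact (mul_inv_eq_one₀ (Real.exp_pos _).ne').1 h3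
  have hlog : ∀ w ∈ ball c r, Real.log ‖f w‖ = (g w).re := fun w hw => by
    rw [hnorm w hw, Real.log_exp]
  have hpos : ∀ w ∈ ball c r, 0 < (g w).re := fun w hw => hlog w hw ▸ Real.log_pos (h1 w hw)
  have hm0 : 0 < m := Real.log_pos (h1 c hc)
  have hgd : DifferentiableOn ℂ g (ball c r) :=
    fun x hx => (hg x hx).differentiableAt.differentiableWithinAt
  have hden : ∀ w ∈ ball c r, g w + m ≠ 0 := by
    intro w hw h
    have := congrArg re h
    simp at this
    linarith [hpos w hw]
  have hsq : ∀ w, ‖g w - m‖ ^ 2 = ((g w).re - m) ^ 2 + (g w).im ^ 2 ∧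
      ‖g w + m‖ ^ 2 = ((g w).re + m) ^ 2 + (g w).im ^ 2 := by
    intro w
    simp only [Complex.sq_norm, normSq_apply]
    constructor <;> simp <;> ring
  have hS := dist_le_div_mul_dist_of_mapsTo_ball (f := fun w => (g w - m) / (g w + m)) (R₂ := 1)
    ((hgd.sub_const _).div (hgd.add_const _) hden) (by
      intro w hw
      simp only [hgc, sub_self, zero_div, mem_closedBall, dist_zero_right, norm_div]
      refine div_le_one_of_le₀ ?_ (norm_nonneg _)
      refine le_of_sq_le_sq ?_ (norm_nonneg _)
      rw [(hsq w).1, (hsq w).2]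
      nlinarith [hpos w hw]) hz
  simp only [hgc, sub_self, zero_div, dist_zero_right, norm_div] at hS
  rw [div_le_iff₀ (norm_pos_iff.2 (hden z hz))] at hS
  rw [hlog z hz]
  set d := dist z c
  have hd0 : 0 ≤ d := dist_nonneg
  have hdr : d < r := hz
  have hS2 : r * ‖g z - m‖ ≤ d * ‖g z + m‖ := by
    calc r * ‖g z - m‖ ≤ r * (1 / r * d * ‖g z + m‖) := by gcongr
      _ = _ := by field_simp
  have hS3 : (r * ‖g z - m‖) ^ 2 ≤ (d * ‖g z + m‖) ^ 2 := by gcongr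
  rw [mul_pow, mul_pow, (hsq z).1, (hsq z).2] at hS3
  have hS4 : (r * (m - (g z).re)) ^ 2 ≤ (d * ((g z).re + m)) ^ 2 := by
    have : d ^ 2 * (g z).im ^ 2 ≤ r ^ 2 * (g z).im ^ 2 := by gcongr
    nlinarith
  have := le_of_sq_le_sq hS4 (mul_nonneg hd0 (by linarith [hpos z hz]))
  linarith

theorem not_eventually_const_of_injOn {f : ℂ → ℂ} {U : Set ℂ} (hU : IsOpen U) (hi : InjOn f U)
    {z : ℂ} (hz : z ∈ U) : ¬ ∀ᶠ w in 𝓝 z, f w = f z := by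
  intro h
  have h2 : ∀ᶠ w in 𝓝[≠] z, w = z := by
    filter_upwards [nhdsWithin_le_nhds h, nhdsWithin_le_nhds (hU.mem_nhds hz)] with w hw hwU
    exact hi hwU hz hw
  obtain ⟨w, hw, hw'⟩ := (h2.and self_mem_nhdsWithin).exists
  exact hw' hw

/-- The inverse of an injective holomorphic function is holomorphic. -/
theorem differentiableOn_of_leftInvOn {f g : ℂ → ℂ} {U : Set ℂ} (hU : IsOpen U)
    (hf : DifferentiableOn ℂ f U) (hg : LeftInvOn g f U) : DifferentiableOn ℂ g (f '' U) := by
  have hi : InjOn f U := hg.injOn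
  have hmap : ∀ z ∈ U, 𝓝 (f z) ≤ map f (𝓝 z) := fun z hz =>
    (hf.analyticAt (hU.mem_nhds hz)).eventually_constant_or_nhds_le_map_nhds.resolve_left
      (not_eventually_const_of_injOn hU hi hz)
  have hopen : IsOpen (f '' U) := by
    rw [isOpen_iff_mem_nhds]
    rintro _ ⟨z, hz, rfl⟩
    exact hmap z hz (image_mem_map (hU.mem_nhds hz))
  have hright : ∀ y ∈ f '' U, f (g y) = y := by
    rintro _ ⟨z, hz, rfl⟩
    rw [hg hz]
  have hcont : ∀ z ∈ U, ContinuousAt g (f z) := by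
    intro z hz
    have h1 : map g (map f (𝓝 z)) = 𝓝 z := by
      rw [Filter.map_map, Filter.map_congr (m₂ := id), Filter.map_id]
      filter_upwards [hU.mem_nhds hz] with w hw using hg hw
    show map g (𝓝 (f z)) ≤ 𝓝 (g (f z))
    rw [hg hz]
    exact (Filter.map_mono (hmap z hz)).trans h1.le
  have hdiff : ∀ z ∈ U, deriv f z ≠ 0 → DifferentiableAt ℂ g (f z) := by
    intro z hz h0
    refine (HasDerivAt.of_local_left_inverse (f := f) (f' := deriv f z) (hcont z hz) ?_ h0
      ?_).differentiableAt
    · rw [hg hz]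
      exact (hf.differentiableAt (hU.mem_nhds hz)).hasDerivAt
    · filter_upwards [hopen.mem_nhds (mem_image_of_mem f hz)] with y hy using hright y hy
  rintro _ ⟨z, hz, rfl⟩
  refine DifferentiableAt.differentiableWithinAt ?_
  have hnz : ∀ᶠ w in 𝓝[≠] z, deriv f w ≠ 0 := by
    refine (hf.analyticAt (hU.mem_nhds hz)).deriv.eventually_eq_zero_or_eventually_ne_zero.resolve_left
      fun h => not_eventually_const_of_injOn hU hi hz ?_
    obtain ⟨r, hr, hball⟩ := Metric.eventually_nhds_iff_ball.1 (h.and (hU.mem_nhds hz))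
    filter_upwards [ball_mem_nhds z hr] with w hw
    exact isOpen_ball.is_const_of_deriv_eq_zero (convex_ball z r).isPreconnected
      (hf.mono fun x hx => (hball x hx).2) (fun x hx => (hball x hx).1) hw (mem_ball_self hr)
  refine (analyticAt_of_differentiable_on_punctured_nhds_of_continuousAt ?_
    (hcont z hz)).differentiableAt
  have ht : Tendsto g (𝓝[≠] (f z)) (𝓝[≠] z) := by
    refine tendsto_nhdsWithin_iff.2 ⟨?_, ?_⟩
    · have := (hcont z hz).tendsto
      rw [hg hz] at this
      exact this.mono_left nhdsWithin_le_nhds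
    · filter_upwards [self_mem_nhdsWithin, nhdsWithin_le_nhds (hopen.mem_nhds
        (mem_image_of_mem f hz))] with y hy hyU h
      exact hy (by rw [← hright y hyU, show g y = z from h]; rfl)
  filter_upwards [ht.eventually hnz, nhdsWithin_le_nhds (hopen.mem_nhds
    (mem_image_of_mem f hz))] with y hy hyU
  obtain ⟨w, hw, rfl⟩ := hyU
  rw [hg hw] at hy
  exact hdiff w hw hy

theorem isPreconnected_setOf_lt_norm {R : ℝ} (hR : 0 ≤ R) :
    IsPreconnected {z : ℂ | R < ‖z‖} := by
  have h : {z : ℂ | R < ‖z‖} = (fun p : ℝ × ℝ => (p.1 : ℂ) * exp (p.2 * I)) '' (Ioi R ×ˢ univ) := by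
    ext z
    constructor
    · intro hz
      exact ⟨(‖z‖, arg z), ⟨hz, mem_univ _⟩, norm_mul_exp_arg_mul_I z⟩
    · rintro ⟨⟨r, t⟩, ⟨hr, -⟩, rfl⟩
      have : R < r := hr
      simpa [norm_exp_ofReal_mul_I, abs_of_pos (hR.trans_lt this)] using this
  rw [h]
  exact (isPreconnected_Ioi.prod isPreconnected_univ).image _ (by fun_prop)

theorem setOf_lt_norm_subset_unboundedComponent {Γ : Set ℂ} {R : ℝ} (hR : 0 ≤ R)
    (hΓ : Γ ⊆ closedBall 0 R) : {z : ℂ | R < ‖z‖} ⊆ unboundedComponent Γ := by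
  have hsub : {z : ℂ | R < ‖z‖} ⊆ Γᶜ := fun z hz hzΓ => by
    have := hΓ hzΓ
    rw [mem_closedBall_zero_iff] at this
    exact (not_lt.2 this) hz
  intro z hz
  refine ⟨hsub hz, fun hb => ?_⟩
  have h := hb.subset ((isPreconnected_setOf_lt_norm hR).subset_connectedComponentIn hz hsub)
  obtain ⟨C, hC⟩ := h.exists_norm_le
  have h1 := hC ((max R C + 1 : ℝ) : ℂ) (by
    rw [mem_ofPred_eq, norm_real, Real.norm_eq_abs]
    exact lt_of_lt_of_le (by linarith [le_max_left R C]) (le_abs_self _))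
  rw [norm_real, Real.norm_eq_abs] at h1
  linarith [le_max_right R C, le_abs_self (max R C + 1)]

theorem isOpen_unboundedComponent {Γ : Set ℂ} (hΓ : IsClosed Γ) :
    IsOpen (unboundedComponent Γ) := by
  rw [isOpen_iff_mem_nhds]
  rintro z ⟨hz, hb⟩
  filter_upwards [(hΓ.isOpen_compl.connectedComponentIn (x := z)).mem_nhds
    (mem_connectedComponentIn hz)] with w hw
  exact ⟨connectedComponentIn_subset _ _ hw, connectedComponentIn_eq hw ▸ hb⟩

theorem IsExtConformal.exists_norm_le {U : Set ℂ} {Φ : ℂ → ℂ} {R₀ : ℝ} (hU : IsOpen U)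
    (hR₀ : {z : ℂ | R₀ < ‖z‖} ⊆ U) (h : IsExtConformal U Φ) (R : ℝ) :
    ∃ M, ∀ z ∈ U, ‖z‖ ≤ R → ‖Φ z‖ ≤ M := by
  obtain ⟨hd, hb, c, hc, hlim⟩ := h
  have hinv : Tendsto (fun w : ℂ => w⁻¹) (𝓝[≠] 0) (cobounded ℂ) := tendsto_inv₀_nhdsNE_zero
  set f : ℂ → ℂ := fun w => w * (Φ w⁻¹ / w⁻¹)⁻¹ with hf
  have hf0 : f 0 = 0 := by simp [hf]
  have hfne : ∀ w ≠ 0, f w = (Φ w⁻¹)⁻¹ := by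
    intro w hw
    simp only [hf]
    field_simp
  have hU' : ∀ᶠ w : ℂ in 𝓝[≠] 0, w⁻¹ ∈ U := by
    refine hinv.eventually ?_
    filter_upwards [tendsto_norm_cobounded_atTop.eventually (eventually_gt_atTop R₀)] with z hz
      using hR₀ hz
  have hUne : ∀ z ∈ U, Φ z ≠ 0 := fun z hz =>
    norm_pos_iff.1 (zero_lt_one.trans (show 1 < ‖Φ z‖ from hb.mapsTo hz))
  have hcont : ContinuousAt f 0 := by
    rw [← continuousWithinAt_compl_self]
    show Tendsto f (𝓝[≠] 0) (𝓝 (f 0))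
    have h1 : Tendsto (fun w : ℂ => w) (𝓝[≠] 0) (𝓝 0) := tendsto_id.mono_left nhdsWithin_le_nhds
    have h2 := (hlim.comp hinv).inv₀ (by exact_mod_cast hc.ne')
    have h3 := h1.mul h2
    rw [zero_mul] at h3
    rw [hf0]
    exact h3
  have han : AnalyticAt ℂ f 0 := by
    refine analyticAt_of_differentiable_on_punctured_nhds_of_continuousAt ?_ hcont
    filter_upwards [hU', self_mem_nhdsWithin] with w hw hw0
    have hw0' : w ≠ 0 := hw0
    have h1 : DifferentiableAt ℂ (fun w => (Φ w⁻¹)⁻¹) w :=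
      DifferentiableAt.inv (DifferentiableAt.comp w
        (hd.differentiableAt (hU.mem_nhds hw)) (differentiableAt_inv hw0')) (hUne _ hw)
    refine h1.congr_of_eventuallyEq ?_
    filter_upwards [isOpen_ne.mem_nhds hw0'] with v hv using hfne v hv
  have hle : 𝓝 (f 0) ≤ map f (𝓝 0) := by
    refine han.eventually_constant_or_nhds_le_map_nhds.resolve_left fun h => ?_
    obtain ⟨w, ⟨hw, hwU⟩, hw0⟩ :=
      (((h.filter_mono nhdsWithin_le_nhds).and hU').and self_mem_nhdsWithin).exists
    rw [hf0, hfne w hw0] at hw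
    exact hUne _ hwU (inv_eq_zero.1 hw)
  set R' := max (max R R₀) 0 + 1 with hR'
  have hR'0 : 0 < R' := by positivity
  obtain ⟨η, hη, hball⟩ := Metric.mem_nhds_iff.1
    (hle (image_mem_map (ball_mem_nhds (0 : ℂ) (inv_pos.2 hR'0))))
  refine ⟨η⁻¹, fun z hz hzR => ?_⟩
  by_contra! hlt
  have h1 : (Φ z)⁻¹ ∈ ball (f 0) η := by
    rw [hf0, mem_ball_zero_iff, norm_inv]
    exact inv_lt_of_inv_lt₀ hη hlt
  obtain ⟨w, hw, hwz⟩ := hball h1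
  have hw0 : w ≠ 0 := by
    rintro rfl
    rw [hf0] at hwz
    exact hUne z hz (inv_eq_zero.1 hwz.symm)
  rw [hfne w hw0, inv_inj] at hwz
  have hwn : R' < ‖w⁻¹‖ := by
    rw [norm_inv]
    rw [mem_ball_zero_iff] at hw
    exact lt_inv_of_lt_inv₀ (norm_pos_iff.2 hw0) hw
  have h2 : R ≤ R' ∧ R₀ ≤ R' := by
    constructor <;> linarith [le_max_left R R₀, le_max_right R R₀, le_max_left (max R R₀) 0]
  have := hb.injOn (hR₀ (h2.2.trans_lt hwn)) hz hwz
  rw [this] at hwn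
  linarith

/-- Monotonicity of the exterior conformal map in the domain, by the Schwarz lemma. -/
theorem IsExtConformal.norm_le_norm {U V : Set ℂ} {Φ Ψ : ℂ → ℂ} {R₀ : ℝ} (hU : IsOpen U)
    (hV : IsOpen V) (hUV : U ⊆ V) (hR₀ : {z : ℂ | R₀ < ‖z‖} ⊆ U) (hΦ : IsExtConformal U Φ)
    (hΨ : IsExtConformal V Ψ) {z : ℂ} (hz : z ∈ U) : ‖Φ z‖ ≤ ‖Ψ z‖ := by
  have hbdd := hΦ.exists_norm_le hU hR₀
  obtain ⟨hd, hb, -⟩ := hΦ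
  obtain ⟨hd', hb', c, hc, hlim⟩ := hΨ
  set ψ := Function.invFunOn Φ U with hψ
  have hleft : LeftInvOn ψ Φ U := hb.injOn.leftInvOn_invFunOn
  have hψU : ∀ w ∈ extDisk, ψ w ∈ U := fun w hw => hb.surjOn.mapsTo_invFunOn hw
  have hright : ∀ w ∈ extDisk, Φ (ψ w) = w := fun w hw => hb.surjOn.rightInvOn_invFunOn hw
  have hψd : DifferentiableOn ℂ ψ extDisk := by
    have := differentiableOn_of_leftInvOn hU hd hleft
    rwa [hb.image_eq] at this
  have hopen : IsOpen extDisk := isOpen_lt continuous_const continuous_norm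
  have hinv : Tendsto (fun w : ℂ => w⁻¹) (𝓝[≠] 0) (cobounded ℂ) := tendsto_inv₀_nhdsNE_zero
  have hψlim : Tendsto ψ (cobounded ℂ) (cobounded ℂ) := by
    rw [← tendsto_norm_atTop_iff_cobounded, Filter.tendsto_atTop]
    intro R
    obtain ⟨M, hM⟩ := hbdd R
    filter_upwards [tendsto_norm_cobounded_atTop.eventually (eventually_gt_atTop (max M 1))]
      with w hw
    have hwe : w ∈ extDisk := (le_max_right _ _).trans_lt hw
    by_contra! hlt
    have := hM _ (hψU w hwe) hlt.le
    rw [hright w hwe] at this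
    exact absurd hw (not_lt.2 (this.trans (le_max_left _ _)))
  have hΨlim : Tendsto (fun z => (Ψ z)⁻¹) (cobounded ℂ) (𝓝 0) := by
    have h1 := (hlim.inv₀ (by exact_mod_cast hc.ne')).mul tendsto_inv₀_cobounded
    rw [mul_zero] at h1
    refine h1.congr' ?_
    filter_upwards [tendsto_norm_cobounded_atTop.eventually (eventually_gt_atTop 0)] with w hw
    have : w ≠ 0 := norm_pos_iff.1 hw
    field_simp
  set k : ℂ → ℂ := fun w => if w = 0 then 0 else (Ψ (ψ w⁻¹))⁻¹ with hk
  have hk0 : k 0 = 0 := by simp [hk]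
  have hkne : ∀ w ≠ 0, k w = (Ψ (ψ w⁻¹))⁻¹ := fun w hw => by simp [hk, hw]
  have hmem : ∀ w ∈ ball (0 : ℂ) 1, w ≠ 0 → w⁻¹ ∈ extDisk := by
    intro w hw hw0
    rw [mem_ball_zero_iff] at hw
    show 1 < ‖w⁻¹‖
    rw [norm_inv]
    exact (one_lt_inv₀ (norm_pos_iff.2 hw0)).2 hw
  have hlt : ∀ w ∈ ball (0 : ℂ) 1, w ≠ 0 → 1 < ‖Ψ (ψ w⁻¹)‖ := fun w hw hw0 =>
    hb'.mapsTo (hUV (hψU _ (hmem w hw hw0)))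
  have hkd : DifferentiableOn ℂ k (ball 0 1) := by
    refine (differentiableOn_compl_singleton_and_continuousAt_iff (c := 0)
      (ball_mem_nhds _ one_pos)).1 ⟨?_, ?_⟩
    · rintro w ⟨hw, hw0⟩
      have hw0' : w ≠ 0 := hw0
      have h1 := hmem w hw hw0'
      refine DifferentiableAt.differentiableWithinAt ?_
      have h2 : DifferentiableAt ℂ (fun w => ψ w⁻¹) w := DifferentiableAt.comp w
        (hψd.differentiableAt (hopen.mem_nhds h1)) (differentiableAt_inv hw0')
      have h3 : DifferentiableAt ℂ (fun w => (Ψ (ψ w⁻¹))⁻¹) w :=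
        DifferentiableAt.inv (DifferentiableAt.comp w
          (hd'.differentiableAt (hV.mem_nhds (hUV (hψU _ h1)))) h2)
          (norm_pos_iff.1 (zero_lt_one.trans (hlt w hw hw0')))
      refine h3.congr_of_eventuallyEq ?_
      filter_upwards [isOpen_ne.mem_nhds hw0'] with v hv using hkne v hv
    · rw [← continuousWithinAt_compl_self]
      show Tendsto k (𝓝[≠] 0) (𝓝 (k 0))
      rw [hk0]
      refine (hΨlim.comp (hψlim.comp hinv)).congr' ?_
      filter_upwards [self_mem_nhdsWithin] with w hw using (hkne w hw).symm
  have hmaps : MapsTo k (ball 0 1) (closedBall 0 1) := by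
    intro w hw
    rw [mem_closedBall_zero_iff]
    by_cases hw0 : w = 0
    · simp [hw0, hk0]
    · rw [hkne w hw0, norm_inv]
      exact inv_le_one_of_one_le₀ (hlt w hw hw0).le
  have h1 : 1 < ‖Φ z‖ := hb.mapsTo hz
  have h2 : 1 < ‖Ψ z‖ := hb'.mapsTo (hUV hz)
  have hΦ0 : Φ z ≠ 0 := norm_pos_iff.1 (zero_lt_one.trans h1)
  have h3 := norm_le_norm_of_mapsTo_ball (z := (Φ z)⁻¹) hkd hmaps hk0 (by
    rw [norm_inv]
    exact inv_lt_one_of_one_lt₀ h1)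
  rw [hkne _ (inv_ne_zero hΦ0), inv_inv, hleft hz, norm_inv, norm_inv] at h3
  exact (inv_le_inv₀ (by linarith) (by linarith)).1 h3

theorem IsJordanCurve.exists_param {Γ : Set ℂ} (hΓ : IsJordanCurve Γ) {p : ℂ} (hp : p ∈ Γ) :
    ∃ g : ℝ → ℂ, ContinuousOn g (Icc 0 1) ∧ InjOn g (Ico 0 1) ∧ g 0 = p ∧ g 1 = p ∧
      Γ = g '' Icc 0 1 := by
  obtain ⟨γ, hc, hi, rfl⟩ := hΓ
  obtain ⟨w, hw, rfl⟩ := hp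
  have hw1 : ‖w‖ = 1 := by simpa using hw
  have hw0 : w ≠ 0 := norm_pos_iff.1 (hw1 ▸ one_pos)
  have hmem : ∀ t : ℝ, w * exp (((2 * Real.pi * t : ℝ) : ℂ) * I) ∈ sphere (0 : ℂ) 1 := by
    intro t
    rw [mem_sphere_zero_iff_norm, norm_mul, hw1, norm_exp_ofReal_mul_I, one_mul]
  refine ⟨fun t => γ (w * exp (((2 * Real.pi * t : ℝ) : ℂ) * I)), ?_, ?_, ?_, ?_, ?_⟩
  · exact hc.comp (by fun_prop) fun t _ => hmem t
  · intro s hs t ht hst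
    have h1 := mul_left_cancel₀ hw0 (hi (hmem s) (hmem t) hst)
    obtain ⟨n, hn⟩ := exp_eq_exp_iff_exists_int.1 h1
    have h2 : s = t + n := by
      have h3 : ((2 * Real.pi * s : ℝ) : ℂ) = ((2 * Real.pi * (t + n) : ℝ) : ℂ) := by
        refine mul_right_cancel₀ I_ne_zero ?_
        rw [hn]
        push_cast
        ring
      exact mul_left_cancel₀ (by positivity) (ofReal_injective h3)
    have h4 : (-1 : ℝ) < n := by linarith [hs.1, ht.2]
    have h5 : (n : ℝ) < 1 := by linarith [hs.2, ht.1]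
    have h6 : n = 0 := by
      have h7 : (-1 : ℤ) < n := by exact_mod_cast h4
      have h8 : n < 1 := by exact_mod_cast h5
      omega
    simpa [h6] using h2
  · simp
  · simp
  · refine Subset.antisymm ?_ ?_
    · rintro _ ⟨v, hv, rfl⟩
      have hv1 : ‖v‖ = 1 := by simpa using hv
      refine ⟨Int.fract (arg (v / w) / (2 * Real.pi)), ⟨Int.fract_nonneg _, (Int.fract_lt_one _).le⟩, ?_⟩
      simp only
      congr 1
      have h1 : exp (arg (v / w) * I) = v / w := by
        have := norm_mul_exp_arg_mul_I (v / w)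
        rwa [norm_div, hv1, hw1, div_one, ofReal_one, one_mul] at this
      have h2 : ((2 * Real.pi * Int.fract (arg (v / w) / (2 * Real.pi)) : ℝ) : ℂ) * I =
          arg (v / w) * I + (-⌊arg (v / w) / (2 * Real.pi)⌋ : ℤ) * (2 * Real.pi * I) := by
        have h3 : 2 * Real.pi * Int.fract (arg (v / w) / (2 * Real.pi)) =
            arg (v / w) - ⌊arg (v / w) / (2 * Real.pi)⌋ * (2 * Real.pi) := by
          rw [Int.fract]
          field_simp
        rw [h3]
        push_cast
        ring
      rw [h2, exp_add, exp_int_mul_two_pi_mul_I, mul_one, h1]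
      field_simp
    · rintro _ ⟨t, -, rfl⟩
      exact mem_image_of_mem γ (hmem t)

section ClosedCurve

variable {g : ℝ → ℂ}

theorem eq_of_injOn_Ico (hi : InjOn g (Ico 0 1)) (h01 : g 0 = g 1) {x y : ℝ} (hx : x ∈ Ioo 0 1)
    (hy : y ∈ Icc 0 1) (h : g x = g y) : x = y := by
  rcases hy.2.lt_or_eq with h1 | rfl
  · exact hi ⟨hx.1.le, hx.2⟩ ⟨hy.1, h1⟩ h
  · exact absurd (hi ⟨hx.1.le, hx.2⟩ ⟨le_rfl, one_pos⟩ (h.trans h01.symm)) hx.1.ne'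

theorem isClosed_image_Icc (hc : ContinuousOn g (Icc 0 1)) {p q : ℝ} (hp : 0 ≤ p) (hq : q ≤ 1) :
    IsClosed (g '' Icc p q) :=
  (isCompact_Icc.image_of_continuousOn (hc.mono (Icc_subset_Icc hp hq))).isClosed

theorem isSubarc_image_Icc (hc : ContinuousOn g (Icc 0 1)) {p q : ℝ} (hp : 0 ≤ p) (hq : q ≤ 1) :
    IsSubarc (g '' Icc 0 1) (g '' Icc p q) :=
  ⟨image_mono (Icc_subset_Icc hp hq), isClosed_image_Icc hc hp hq,
    isPreconnected_Icc.image _ (hc.mono (Icc_subset_Icc hp hq))⟩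

/-- Two points of a Jordan curve separate the two complementary arcs. -/
theorem mem_or_mem_of_isPreconnected (hc : ContinuousOn g (Icc 0 1)) (hi : InjOn g (Ico 0 1))
    (h01 : g 0 = g 1) {J : Set ℂ} (hJ : IsPreconnected J) (hJΓ : J ⊆ g '' Icc 0 1) {p q x : ℝ}
    (hp : 0 < p) (hpx : p ≤ x) (hxq : x ≤ q) (hq : q < 1) (hx : g x ∈ J) (h0 : g 0 ∈ J) :
    g p ∈ J ∨ g q ∈ J := by
  obtain ⟨w, hwJ, ⟨y, hy, rfl⟩, hw'⟩ := isPreconnected_closed_iff.1 hJ (g '' Icc p q)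
    (g '' Icc 0 p ∪ g '' Icc q 1) (isClosed_image_Icc hc hp.le hq.le)
    ((isClosed_image_Icc hc le_rfl (by linarith)).union
      (isClosed_image_Icc hc (by linarith) le_rfl)) (by
      intro w hw
      obtain ⟨y, hy, rfl⟩ := hJΓ hw
      rcases le_total y p with h | h
      · exact Or.inr (Or.inl ⟨y, ⟨hy.1, h⟩, rfl⟩)
      rcases le_total y q with h' | h'
      · exact Or.inl ⟨y, ⟨h, h'⟩, rfl⟩
      · exact Or.inr (Or.inr ⟨y, ⟨h', hy.2⟩, rfl⟩))
    ⟨g x, hx, x, ⟨hpx, hxq⟩, rfl⟩ ⟨g 0, h0, Or.inl ⟨0, ⟨le_rfl, hp.le⟩, rfl⟩⟩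
  have hy' : y ∈ Ioo (0 : ℝ) 1 := ⟨hp.trans_le hy.1, hy.2.trans_lt hq⟩
  rcases hw' with ⟨v, hv, hvy⟩ | ⟨v, hv, hvy⟩
  · have := eq_of_injOn_Ico hi h01 hy' ⟨hv.1, by linarith [hv.2]⟩ hvy.symm
    left
    rwa [le_antisymm hy.1 (this ▸ hv.2)]
  · have := eq_of_injOn_Ico hi h01 hy' ⟨by linarith [hv.1], hv.2⟩ hvy.symm
    right
    rwa [le_antisymm (this ▸ hv.1) hy.2]

theorem exists_isSubarc_measure_eq_zero (hc : ContinuousOn g (Icc 0 1)) (hi : InjOn g (Ico 0 1))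
    (h01 : g 0 = g 1) {E : Set ℂ} (hE : IsSubarc (g '' Icc 0 1) E) (hEfin : μH[1] E ≠ ∞)
    {u α β : ℝ} (hu : 0 < u) (huα : u < α) (hαβ : α < β) (hβ : β < 1)
    (hmin : ∀ K, IsSubarc (g '' Icc 0 1) K → g α ∈ K → g β ∈ K → μH[1] E ≤ μH[1] K)
    (h0 : g 0 ∈ E) (hα : g α ∈ E) (huE : g u ∉ E) :
    ∃ K, IsSubarc (g '' Icc 0 1) K ∧ g 0 ∈ K ∧ g β ∈ K ∧ μH[1] K = 0 := by
  have hsub : ∀ x ∈ Icc α 1, g x ∈ E := by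
    intro x hx
    rcases hx.2.lt_or_eq with h1 | rfl
    · exact (mem_or_mem_of_isPreconnected hc hi h01 hE.2.2 hE.1 hu huα.le hx.1 h1 hα
        h0).resolve_left huE
    · exact h01 ▸ h0
  have hα0 : 0 < α := hu.trans huα
  set A := g '' Icc α β
  set B := g '' Icc β 1
  have hA : IsSubarc (g '' Icc 0 1) A := isSubarc_image_Icc hc hα0.le hβ.le
  have hB : IsSubarc (g '' Icc 0 1) B := isSubarc_image_Icc hc (hα0.trans hαβ).le le_rfl
  refine ⟨B, hB, ⟨1, ⟨hβ.le, le_rfl⟩, h01.symm⟩, ⟨β, ⟨le_rfl, hβ.le⟩, rfl⟩, ?_⟩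
  have hAE : A ⊆ E := by
    rintro _ ⟨x, hx, rfl⟩
    exact hsub x ⟨hx.1, by linarith [hx.2]⟩
  have hBE : B ⊆ E := by
    rintro _ ⟨x, hx, rfl⟩
    exact hsub x ⟨by linarith [hx.1], hx.2⟩
  have hAB : B ∩ A ⊆ {g β} := by
    rintro _ ⟨⟨y, hy, rfl⟩, ⟨x, hx, hxy⟩⟩
    have := eq_of_injOn_Ico hi h01 ⟨hα0.trans_le hx.1, hx.2.trans_lt hβ⟩
      ⟨by linarith [hy.1], hy.2⟩ hxy
    rw [mem_singleton_iff, le_antisymm (this ▸ hx.2) hy.1]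
  have hEA : μH[1] E ≤ μH[1] A :=
    hmin A hA ⟨α, ⟨le_rfl, hαβ.le⟩, rfl⟩ ⟨β, ⟨hαβ.le, le_rfl⟩, rfl⟩
  have hEdiff : μH[1] (E \ A) = 0 := by
    rw [measure_sdiff hAE hA.2.1.measurableSet.nullMeasurableSet
      (ne_top_of_le_ne_top hEfin (measure_mono hAE))]
    exact tsub_eq_zero_of_le hEA
  have : NullSingletonClass (μH[1] : Measure ℂ) := Measure.nullSingletonClass_hausdorff ℂ one_pos
  refine measure_mono_null (t := (E \ A) ∪ {g β}) ?_ (measure_union_null hEdiff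
    (measure_singleton _))
  intro y hy
  by_cases h : y ∈ A
  · exact Or.inr (hAB ⟨hy, h⟩)
  · exact Or.inl ⟨hBE hy, h⟩

theorem mem_or_mem_of_isSubarc_of_lt (hc : ContinuousOn g (Icc 0 1)) (hi : InjOn g (Ico 0 1))
    (h01 : g 0 = g 1) {E J : Set ℂ} (hE : IsSubarc (g '' Icc 0 1) E) (hEfin : μH[1] E ≠ ∞)
    (hJ : IsSubarc (g '' Icc 0 1) J) {u α β : ℝ} (hu : u ∈ Ioo 0 1) (hα : 0 < α) (hαβ : α < β)
    (hβ : β < 1)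
    (hmin : ∀ K, IsSubarc (g '' Icc 0 1) K → g α ∈ K → g β ∈ K → μH[1] E ≤ μH[1] K)
    (hposα : ∀ K, IsSubarc (g '' Icc 0 1) K → g 0 ∈ K → g α ∈ K → μH[1] K ≠ 0)
    (hposβ : ∀ K, IsSubarc (g '' Icc 0 1) K → g 0 ∈ K → g β ∈ K → μH[1] K ≠ 0)
    (h0 : g 0 ∈ E) (hαE : g α ∈ E) (hβE : g β ∈ E) (huE : g u ∉ E) (h0J : g 0 ∈ J)
    (huJ : g u ∈ J) : g α ∈ J ∨ g β ∈ J := by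
  rcases lt_or_ge u α with h | h
  · obtain ⟨K, hK, hK0, hKβ, hKz⟩ := exists_isSubarc_measure_eq_zero hc hi h01 hE hEfin hu.1 h hαβ
      hβ hmin h0 hαE huE
    exact absurd hKz (hposβ K hK hK0 hKβ)
  rcases le_or_gt u β with h' | h'
  · exact mem_or_mem_of_isPreconnected hc hi h01 hJ.2.2 hJ.1 hα h h' hβ huJ h0J
  · set g' : ℝ → ℂ := fun x => g (1 - x) with hg'
    have himg : g' '' Icc 0 1 = g '' Icc 0 1 := by
      have : g' = g ∘ fun x => 1 - x := rfl
      rw [this, image_comp, image_const_sub_Icc, sub_self, sub_zero]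
    have hg'' : ∀ x, g' (1 - x) = g x := fun x => by simp [hg']
    have h0' : g' 0 = g 0 := by simp [hg', h01]
    have h := exists_isSubarc_measure_eq_zero (g := g') (E := E) (u := 1 - u) (α := 1 - β)
      (β := 1 - α)
      (hc.comp (by fun_prop) fun x hx => ⟨by linarith [hx.2], by linarith [hx.1]⟩)
      (by
        intro x hx y hy hxy
        rcases hx.1.lt_or_eq with h | rfl
        · have := eq_of_injOn_Ico hi h01 (x := 1 - x) (y := 1 - y)
            ⟨by linarith [hx.2], by linarith⟩ ⟨by linarith [hy.2], by linarith [hy.1]⟩ hxy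
          linarith
        rcases hy.1.lt_or_eq with h | rfl
        · have := eq_of_injOn_Ico hi h01 (x := 1 - y) (y := 1 - 0)
            ⟨by linarith [hy.2], by linarith⟩ ⟨by simp, by simp⟩ hxy.symm
          linarith
        · rfl)
      (by simp [hg', h01]) (by rwa [himg]) hEfin (by linarith [hu.2]) (by linarith) (by linarith)
      (by linarith)
    rw [himg, h0', hg'', hg'', hg''] at h
    obtain ⟨K, hK, hK0, hKα, hKz⟩ := h (fun K hK h1 h2 => hmin K hK h2 h1) h0 hβE huE
    exact absurd hKz (hposα K hK hK0 hKα)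

end ClosedCurve

theorem shorterArcLength_le {Γ J : Set ℂ} {z w : ℂ} (hJ : IsSubarc Γ J) (hz : z ∈ J)
    (hw : w ∈ J) : shorterArcLength Γ z w ≤ μH[1] J :=
  iInf₂_le J ⟨hJ, hz, hw⟩

theorem IsShorterArc.mem_or_mem {Γ E J : Set ℂ} (hΓ : IsJordanCurve Γ) {a b p z : ℂ}
    (hE : IsShorterArc Γ a b E) (hfin : shorterArcLength Γ a b ≠ ∞) (hp : p ∈ E)
    (ha : shorterArcLength Γ a p ≠ 0) (hb : shorterArcLength Γ p b ≠ 0) (hJ : IsSubarc Γ J)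
    (hpJ : p ∈ J) (hzJ : z ∈ J) (hzE : z ∉ E) : a ∈ J ∨ b ∈ J := by
  obtain ⟨hEarc, haE, hbE, hlen⟩ := hE
  have hpa : ∀ K, IsSubarc Γ K → p ∈ K → a ∈ K → μH[1] K ≠ 0 := fun K hK h1 h2 h =>
    ha (le_antisymm (h ▸ shorterArcLength_le hK h2 h1) zero_le)
  have hpb : ∀ K, IsSubarc Γ K → p ∈ K → b ∈ K → μH[1] K ≠ 0 := fun K hK h1 h2 h =>
    hb (le_antisymm (h ▸ shorterArcLength_le hK h1 h2) zero_le)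
  have hmin : ∀ K, IsSubarc Γ K → a ∈ K → b ∈ K → μH[1] E ≤ μH[1] K := fun K hK h1 h2 =>
    hlen ▸ shorterArcLength_le hK h1 h2
  have : NullSingletonClass (μH[1] : Measure ℂ) := Measure.nullSingletonClass_hausdorff ℂ one_pos
  have hsing : ∀ w ∈ Γ, IsSubarc Γ {w} := fun w hw =>
    ⟨singleton_subset_iff.2 hw, isClosed_singleton, isPreconnected_singleton⟩
  have hap : a ≠ p := by
    rintro rfl
    exact hpa _ (hsing a (hEarc.1 haE)) rfl rfl (measure_singleton _)
  have hbp : b ≠ p := by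
    rintro rfl
    exact hpb _ (hsing b (hEarc.1 hbE)) rfl rfl (measure_singleton _)
  have hab : a ≠ b := by
    rintro rfl
    refine hpa E hEarc hp haE (le_antisymm ?_ zero_le)
    exact (hmin _ (hsing a (hEarc.1 haE)) rfl rfl).trans (measure_singleton _).le
  obtain ⟨g, hc, hi, h0, h1, hΓg⟩ := hΓ.exists_param (hEarc.1 hp)
  have hpar : ∀ w ∈ Γ, w ≠ p → ∃ t ∈ Ioo (0 : ℝ) 1, g t = w := by
    intro w hw hwp
    rw [hΓg] at hw
    obtain ⟨t, ht, rfl⟩ := hw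
    refine ⟨t, ⟨ht.1.lt_of_ne ?_, ht.2.lt_of_ne ?_⟩, rfl⟩
    · rintro rfl
      exact hwp h0
    · rintro rfl
      exact hwp h1
  obtain ⟨α, hα, rfl⟩ := hpar a (hEarc.1 haE) hap
  obtain ⟨β, hβ, rfl⟩ := hpar b (hEarc.1 hbE) hbp
  obtain ⟨u, hu, rfl⟩ := hpar z (hJ.1 hzJ) (by rintro rfl; exact hzE hp)
  subst h0
  subst hΓg
  have hEfin : μH[1] E ≠ ∞ := hlen ▸ hfin
  rcases lt_trichotomy α β with h | rfl | h
  · exact mem_or_mem_of_isSubarc_of_lt hc hi h1.symm hEarc hEfin hJ hu hα.1 h hβ.2 hmin hpa hpb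
      hp haE hbE hzE hpJ hzJ
  · exact absurd rfl hab
  · exact (mem_or_mem_of_isSubarc_of_lt hc hi h1.symm hEarc hEfin hJ hu hβ.1 h hα.2
      (fun K hK h1 h2 => hmin K hK h2 h1) hpb hpa hp hbE haE hzE hpJ hzJ).symm

/-- A short arc of a quasismooth curve is separated from the complementary arc. -/
theorem div_le_dist_of_notMem_shorterArc {Γ E : Set ℂ} {Λ s : ℝ} (hΓ : IsJordanCurve Γ)
    (hq : IsQuasismooth Γ Λ) {a b p z : ℂ} (haΓ : a ∈ Γ) (hbΓ : b ∈ Γ)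
    (hE : IsShorterArc Γ a b E) (hp : p ∈ E) (hs : 0 < s)
    (ha : shorterArcLength Γ a p = ENNReal.ofReal s)
    (hb : shorterArcLength Γ p b = ENNReal.ofReal s) (hz : z ∈ Γ) (hzE : z ∉ E) :
    s / Λ ≤ dist z p := by
  have hΛ : 0 < Λ := one_pos.trans_le hq.1
  have hs0 : ENNReal.ofReal s ≠ 0 := (ENNReal.ofReal_pos.2 hs).ne'
  have h1 : ENNReal.ofReal s ≤ shorterArcLength Γ z p := by
    refine le_iInf₂ fun J hJ => ?_
    rcases hE.mem_or_mem hΓ (ne_top_of_le_ne_top ENNReal.ofReal_ne_top (hq.2 a haΓ b hbΓ)) hp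
      (ha ▸ hs0) (hb ▸ hs0) hJ.1 hJ.2.2 hJ.2.1 hzE with h | h
    · exact ha ▸ shorterArcLength_le hJ.1 h hJ.2.2
    · exact hb ▸ shorterArcLength_le hJ.1 hJ.2.2 h
  have h2 := (ENNReal.ofReal_le_ofReal_iff (by positivity)).1 (h1.trans (hq.2 z hz p (hE.1.1 hp)))
  rwa [div_le_iff₀' hΛ]

/-- Harnack's inequality along two overlapping disks. -/
theorem harnack_chain {f : ℂ → ℂ} {V : Set ℂ} {z ζ : ℂ} {s t : ℝ} (hf : DifferentiableOn ℂ f V)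
    (h1 : ∀ w ∈ V, 1 < ‖f w‖) (hs : 0 < s) (ht : 0 < t) (ht1 : t < 1) (hd : dist z ζ = s)
    (hζ : ball ζ s ⊆ V) (hz : ball z (4 * t * s) ⊆ V) :
    t / 6 * Real.log ‖f ζ‖ ≤ Real.log ‖f z‖ := by
  have hts : 0 < t * s := by positivity
  set p : ℂ := AffineMap.lineMap z ζ t with hp
  have hpz : dist z p = t * s := by
    rw [hp, dist_left_lineMap, hd, Real.norm_eq_abs, abs_of_pos ht]
  have hpζ : dist p ζ = (1 - t) * s := by
    rw [hp, dist_lineMap_right, hd, Real.norm_eq_abs, abs_of_pos (by linarith)]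
  have hsub : ball p (2 * t * s) ⊆ V := by
    refine Subset.trans (ball_subset_ball' ?_) hz
    rw [dist_comm, hpz]
    linarith
  have hpV : p ∈ V := hsub (mem_ball_self (by positivity))
  have hA := harnack_log_norm (z := p) (hf.mono hζ) (fun w hw => h1 w (hζ hw))
    (by rw [mem_ball, hpζ]; linarith)
  have hB := harnack_log_norm (z := z) (hf.mono hsub) (fun w hw => h1 w (hsub hw))
    (by rw [mem_ball, hpz]; linarith)
  rw [hpζ] at hA
  rw [hpz] at hB
  have hL := Real.log_pos (h1 p hpV)
  have hA' : t * Real.log ‖f ζ‖ ≤ (2 - t) * Real.log ‖f p‖ := by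
    refine le_of_mul_le_mul_left ?_ hs
    linarith
  have hB' : Real.log ‖f p‖ ≤ 3 * Real.log ‖f z‖ := by
    refine le_of_mul_le_mul_left ?_ hts
    linarith
  have : 0 ≤ t * Real.log ‖f p‖ := by positivity
  linarith

/-- (4.11p): there is `ε₁ = ε₁(Γ) > 0` with the following property.
Let `0 < s < diam Γ`, let `z_s ∈ Γ` and `ζ_s ∈ Γ_{δ(s)}` with `|z_s - ζ_s| = s = ρ_{δ(s)}(z_s)`,
let `E_s = Γ(z_s*, z_s**)` be the arc around `z_s` whose halves `Γ(z_s*,z_s)`, `Γ(z_s,z_s**)`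
both have length `s/2`, let `A_s` be the closure of `Γ ∖ E_s`, and let `Φ_s` be the normalized
conformal map of the complement `Ω_s` of `A_s` onto `𝔻*`. Then `|Φ_s(z_s)| ≥ exp(ε₁ δ(s))`. -/
theorem faber_map_lower_bound
    (Γ : Set ℂ) (Λ : ℝ) (hΓJ : IsJordanCurve Γ) (hΓq : IsQuasismooth Γ Λ)
    (Φ : ℂ → ℂ) (hΦ : IsExtConformal (unboundedComponent Γ) Φ) :
    ∃ ε₁ > (0:ℝ), ∀ (s δs : ℝ) (zs ζs zst zsst : ℂ) (Es : Set ℂ) (Φs : ℂ → ℂ),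
      0 < s → s < Metric.diam Γ →
      0 < δs → setDist Γ (levelCurve (unboundedComponent Γ) Φ δs) = s →
      zs ∈ Γ → ζs ∈ levelCurve (unboundedComponent Γ) Φ δs →
      dist zs ζs = s → rho (unboundedComponent Γ) Φ δs zs = s →
      zst ∈ Γ → zsst ∈ Γ → IsShorterArc Γ zst zsst Es → zs ∈ Es →
      shorterArcLength Γ zst zs = ENNReal.ofReal (s/2) →
      shorterArcLength Γ zs zsst = ENNReal.ofReal (s/2) →
      IsExtConformal (closure (Γ \ Es))ᶜ Φs →
      Real.exp (ε₁ * δs) ≤ ‖Φs zs‖ := by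
  have hΛ1 := hΓq.1
  have hΛ : 0 < Λ := one_pos.trans_le hΛ1
  have hcpt : IsCompact Γ := by
    obtain ⟨γ, hc, -, rfl⟩ := hΓJ
    exact (isCompact_sphere 0 1).image_of_continuousOn hc
  obtain ⟨R, hR, hΓR⟩ := hcpt.isBounded.subset_closedBall_lt 0 (0 : ℂ)
  have hUo : IsOpen (unboundedComponent Γ) := isOpen_unboundedComponent hcpt.isClosed
  have hUR := setOf_lt_norm_subset_unboundedComponent hR.le hΓR
  obtain ⟨M, hM⟩ := hΦ.exists_norm_le hUo hUR (R + Metric.diam Γ)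
  refine ⟨1 / (48 * Λ * max M 1), by positivity, ?_⟩
  intro s δs zs ζs zst zsst Es Φs hs hsd hδ hdist hzs hζs hzζ _ hzst hzsst hEs hzsE hlen hlen' hΦs
  have hclosure : closure (Γ \ Es) ⊆ Γ := closure_minimal sdiff_subset hcpt.isClosed
  have hV : IsOpen (closure (Γ \ Es))ᶜ := isClosed_closure.isOpen_compl
  have hUV : unboundedComponent Γ ⊆ (closure (Γ \ Es))ᶜ := fun z hz h => hz.1 (hclosure h)
  have hball : ball ζs s ⊆ (closure (Γ \ Es))ᶜ := by
    intro z hz h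
    have : s ≤ dist z ζs := hdist ▸ csInf_le
      ⟨0, by rintro _ ⟨x, -, y, -, rfl⟩; exact dist_nonneg⟩ (mem_image2_of_mem (hclosure h) hζs)
    exact absurd hz (not_lt.2 this)
  have hball' : ball zs (4 * (1 / (8 * Λ)) * s) ⊆ (closure (Γ \ Es))ᶜ := by
    intro z hz h
    have hsub : closure (Γ \ Es) ⊆ {z | s / 2 / Λ ≤ dist z zs} :=
      closure_minimal (fun w hw => div_le_dist_of_notMem_shorterArc hΓJ hΓq hzst hzsst hEs hzsE
        (half_pos hs) hlen hlen' hw.1 hw.2)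
        (isClosed_le continuous_const (continuous_id.dist continuous_const))
    have h1 : s / 2 / Λ ≤ dist z zs := hsub h
    have h2 : 4 * (1 / (8 * Λ)) * s = s / 2 / Λ := by
      field_simp
      norm_num
    rw [h2] at hz
    exact absurd hz (not_lt.2 h1)
  have hgt : ∀ w ∈ (closure (Γ \ Es))ᶜ, 1 < ‖Φs w‖ := fun w hw => hΦs.2.1.mapsTo hw
  have hH := harnack_chain hΦs.1 hgt hs (t := 1 / (8 * Λ)) (by positivity)
    (by rw [div_lt_one (by positivity)]; linarith) hzζ hball hball'
  have hcomp := hΦ.norm_le_norm hUo hV hUV hUR hΦs hζs.1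
  have hζM : ‖Φ ζs‖ ≤ M := by
    refine hM ζs hζs.1 ?_
    have h1 := hΓR hzs
    rw [mem_closedBall_zero_iff] at h1
    have h2 : ‖ζs‖ ≤ ‖zs‖ + dist zs ζs := by
      rw [dist_comm, dist_eq_norm]
      linarith [norm_sub_norm_le ζs zs]
    linarith
  rw [hζs.2] at hcomp hζM
  have hlog : δs / max M 1 ≤ Real.log ‖Φs ζs‖ := calc
    δs / max M 1 ≤ δs / (1 + δs) := by
      gcongr
      exact hζM.trans (le_max_left _ _)
    _ = 1 - (1 + δs)⁻¹ := by
      field_simp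
      ring
    _ ≤ Real.log (1 + δs) := Real.one_sub_inv_le_log_of_pos (by linarith)
    _ ≤ Real.log ‖Φs ζs‖ := Real.log_le_log (by linarith) hcomp
  have hzV : zs ∈ (closure (Γ \ Es))ᶜ := hball' (mem_ball_self (by positivity))
  rw [← Real.le_log_iff_exp_le (one_pos.trans (hgt zs hzV))]
  calc 1 / (48 * Λ * max M 1) * δs = 1 / (8 * Λ) / 6 * (δs / max M 1) := by
        field_simp
        norm_num
    _ ≤ 1 / (8 * Λ) / 6 * Real.log ‖Φs ζs‖ := by gcongr
    _ ≤ Real.log ‖Φs zs‖ := hH
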